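/- arXiv:1810.03186 — 9 statements merged into one kernel-verified Lean document; each statement's English description precedes it below -/
import Mathlib

section
/- Let δ ∈ (0,1), p > 1, and let η : ℝ → ℂⁿ be continuously differentiable with ‖η'‖_{0,p,δ,+} := (∫_0^∞ e^{pδt} ‖η'(t)‖^p dt)^{1/p} < ∞. Then for all R₁, R₂ ≥ 0, (∫_0^∞ e^{pδt} ‖η(t+R₁) − η(t+R₂)‖^p dt)^{1/p} ≤ (|e^{-δR₁} − e^{-δR₂}|/δ) · ‖η'‖_{0,p,δ,+}. -/
open MeasureTheory Set
open scoped ENNReal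

/-- The weighted `L^p` norm `‖f‖_{0,p,δ,+} = (∫_0^∞ e^{pδt} ‖f t‖^p dt)^{1/p}`
on the half-line `[0,∞)`, valued in the extended nonnegative reals. -/
noncomputable def wnormPlus (n : ℕ) (p δ : ℝ) (f : ℝ → (Fin n → ℂ)) : ℝ≥0∞ :=
  (∫⁻ t in Ioi (0:ℝ), ENNReal.ofReal (Real.exp (p * δ * t) * ‖f t‖ ^ p)) ^ (1 / p)

theorem aux_holder (μ : Measure ℝ) (p : ℝ) (hp : 1 < p) (F : ℝ → ℝ≥0∞) (hF : Measurable F) :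
    (∫⁻ s, F s ∂μ) ^ p ≤ μ univ ^ (p - 1) * ∫⁻ s, F s ^ p ∂μ := by
  have hpq := Real.HolderConjugate.conjExponent hp
  have h := ENNReal.lintegral_mul_le_Lp_mul_Lq μ hpq hF.aemeasurable
    (aemeasurable_const (b := (1 : ℝ≥0∞)))
  simp only [Pi.mul_apply, mul_one, ENNReal.one_rpow, lintegral_one] at h
  have hp0 : 0 < p := by linarith
  calc (∫⁻ s, F s ∂μ) ^ p ≤ _ := ENNReal.rpow_le_rpow h hp0.le
    _ = _ := by
      rw [ENNReal.mul_rpow_of_nonneg _ _ hp0.le, ← ENNReal.rpow_mul, ← ENNReal.rpow_mul, mul_comm]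
      have h1 : 1 / p * p = 1 := by field_simp
      have h2 : 1 / p.conjExponent * p = p - 1 := by
        have : p - 1 ≠ 0 := by linarith
        unfold Real.conjExponent
        field_simp
      rw [h1, h2, ENNReal.rpow_one]

theorem aux_mink (μ : Measure ℝ) [SFinite μ] (p : ℝ) (hp : 1 < p) (hμ : ∀ᵐ s ∂μ, 0 ≤ s)
    (G : ℝ → ℝ≥0∞) (hG : Measurable G) :
    ∫⁻ t in Ioi (0:ℝ), (∫⁻ s, G (t + s) ∂μ) ^ p ≤
      μ univ ^ p * ∫⁻ t in Ioi (0:ℝ), G t ^ p := by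
  have hm : Measurable fun x : ℝ × ℝ => G (x.1 + x.2) ^ p := by fun_prop
  calc ∫⁻ t in Ioi (0:ℝ), (∫⁻ s, G (t + s) ∂μ) ^ p
      ≤ ∫⁻ t in Ioi (0:ℝ), μ univ ^ (p - 1) * ∫⁻ s, G (t + s) ^ p ∂μ :=
        lintegral_mono fun t => aux_holder μ p hp _ (by fun_prop)
    _ = μ univ ^ (p - 1) * ∫⁻ t in Ioi (0:ℝ), ∫⁻ s, G (t + s) ^ p ∂μ :=
        lintegral_const_mul _ hm.lintegral_prod_right'
    _ = μ univ ^ (p - 1) * ∫⁻ s, (∫⁻ t in Ioi (0:ℝ), G (t + s) ^ p) ∂μ := by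
        rw [lintegral_lintegral_swap hm.aemeasurable]
    _ ≤ μ univ ^ (p - 1) * ∫⁻ s, (∫⁻ t in Ioi (0:ℝ), G t ^ p) ∂μ := by
        refine mul_le_mul_right (lintegral_mono_ae ?_) _
        filter_upwards [hμ] with s hs
        rw [← lintegral_indicator measurableSet_Ioi, ← lintegral_indicator measurableSet_Ioi,
          ← lintegral_add_right_eq_self ((Ioi (0:ℝ)).indicator fun t => G t ^ p) s]
        refine lintegral_mono fun t => ?_
        by_cases ht : 0 < t
        · have : 0 < t + s := by linarith
          simp [indicator, ht, this]
        · simp [indicator, ht]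
    _ = _ := by
        rw [lintegral_const, mul_comm (lintegral _ _), ← mul_assoc]
        congr 1
        nth_rewrite 2 [← ENNReal.rpow_one (μ univ)]
        rw [← ENNReal.rpow_add_of_nonneg _ _ (by linarith) zero_le_one]
        congr 1; ring

theorem aux_mass (δ : ℝ) (hδ : 0 < δ) (a b : ℝ) (hab : a ≤ b) :
    ∫⁻ s in Ioc a b, ENNReal.ofReal (Real.exp (-δ * s)) =
      ENNReal.ofReal ((Real.exp (-δ * a) - Real.exp (-δ * b)) / δ) := by
  have hc : Continuous fun s : ℝ => Real.exp (-δ * s) := by fun_prop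
  rw [← ofReal_integral_eq_lintegral_ofReal
    ((hc.intervalIntegrable a b).1) (Filter.Eventually.of_forall fun s => (Real.exp_pos _).le),
    ← intervalIntegral.integral_of_le hab]
  congr 1
  have := intervalIntegral.integral_eq_sub_of_hasDerivAt (a := a) (b := b)
    (f := fun s => - Real.exp (-δ * s) / δ) (f' := fun s : ℝ => Real.exp (-δ * s))
    (fun s _ => by
      have h := ((((hasDerivAt_id s).const_mul (-δ)).exp).neg).div_const δ
      convert h using 1
      · rfl
      · rfl
      · simp only [id]
        field_simp) (hc.intervalIntegrable a b)
  rw [this]; ring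

theorem aux_main (n : ℕ) (δ p : ℝ) (hδ : 0 < δ) (hp : 1 < p)
    (η : ℝ → (Fin n → ℂ)) (hη : ContDiff ℝ 1 η)
    (a b : ℝ) (ha : 0 ≤ a) (hab : a ≤ b) :
    wnormPlus n p δ (fun t => η (t + b) - η (t + a)) ≤
      ENNReal.ofReal ((Real.exp (-δ * a) - Real.exp (-δ * b)) / δ) *
        wnormPlus n p δ (deriv η) := by
  have hp0 : 0 < p := by linarith
  have hd : Continuous (deriv η) := hη.continuous_deriv le_rfl
  have hpow : ∀ (t : ℝ) (v : Fin n → ℂ), ENNReal.ofReal (Real.exp (p * δ * t) * ‖v‖ ^ p)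
      = ENNReal.ofReal (Real.exp (δ * t) * ‖v‖) ^ p := by
    intro t v
    rw [ENNReal.ofReal_rpow_of_nonneg (by positivity) hp0.le,
      Real.mul_rpow (by positivity) (by positivity), ← Real.exp_mul]
    congr 3; ring
  let G : ℝ → ℝ≥0∞ := fun u => ENNReal.ofReal (Real.exp (δ * u) * ‖deriv η u‖)
  have hG : Measurable G := by
    apply Measurable.ennreal_ofReal
    apply Continuous.measurable
    fun_prop
  have hw : Measurable fun s : ℝ => ENNReal.ofReal (Real.exp (-δ * s)) := by fun_prop
  let μ : Measure ℝ := (volume.restrict (Ioc a b)).withDensity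
    fun s => ENNReal.ofReal (Real.exp (-δ * s))
  have hμu : μ univ = ENNReal.ofReal ((Real.exp (-δ * a) - Real.exp (-δ * b)) / δ) := by
    rw [← aux_mass δ hδ a b hab]
    simp [μ]
  have hμ0 : ∀ᵐ s ∂μ, 0 ≤ s := by
    apply (withDensity_absolutelyContinuous _ _).ae_le
    filter_upwards [ae_restrict_mem measurableSet_Ioc] with s hs
    exact ha.trans hs.1.le
  have key : ∀ t, ENNReal.ofReal (Real.exp (δ * t) * ‖η (t + b) - η (t + a)‖) ≤
      ∫⁻ s, G (t + s) ∂μ := by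
    intro t
    rw [lintegral_withDensity_eq_lintegral_mul _ hw (by fun_prop)]
    have hc : Continuous fun s => deriv η (t + s) := by fun_prop
    have hftc : η (t + b) - η (t + a) = ∫ s in a..b, deriv η (t + s) := by
      rw [intervalIntegral.integral_comp_add_left (fun s => deriv η s),
        intervalIntegral.integral_deriv_eq_sub
          (fun x _ => (hη.differentiable one_ne_zero) x) (hd.intervalIntegrable _ _)]
    have h1 : ‖η (t + b) - η (t + a)‖ ≤ ∫ s in a..b, ‖deriv η (t + s)‖ := by
      rw [hftc]; exact intervalIntegral.norm_integral_le_integral_norm hab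
    have h2 : ENNReal.ofReal (Real.exp (δ * t) * ∫ s in a..b, ‖deriv η (t + s)‖) =
        ∫⁻ s in Ioc a b, ENNReal.ofReal (Real.exp (δ * t) * ‖deriv η (t + s)‖) := by
      rw [← intervalIntegral.integral_const_mul, intervalIntegral.integral_of_le hab]
      have hc' : Continuous fun s => Real.exp (δ * t) * ‖deriv η (t + s)‖ := by fun_prop
      exact ofReal_integral_eq_lintegral_ofReal ((hc'.intervalIntegrable a b).1)
        (Filter.Eventually.of_forall fun s => by positivity)
    refine (ENNReal.ofReal_le_ofReal
      (mul_le_mul_of_nonneg_left h1 (Real.exp_pos _).le)).trans (h2.le.trans (le_of_eq ?_))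
    refine lintegral_congr fun s => ?_
    simp only [Pi.mul_apply, G]
    rw [← ENNReal.ofReal_mul (Real.exp_pos _).le, ← mul_assoc, ← Real.exp_add]
    congr 3; ring
  unfold wnormPlus
  simp only [hpow]
  calc _ ≤ (μ univ ^ p * ∫⁻ t in Ioi (0:ℝ), G t ^ p) ^ (1 / p) := by
        refine ENNReal.rpow_le_rpow (le_trans (lintegral_mono fun t => ?_)
          (aux_mink μ p hp hμ0 G hG)) (by positivity)
        exact ENNReal.rpow_le_rpow (key t) hp0.le
    _ = _ := by
        rw [ENNReal.mul_rpow_of_nonneg _ _ (by positivity), ← ENNReal.rpow_mul,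
          mul_one_div_cancel hp0.ne', ENNReal.rpow_one, hμu]

/-- translation-difference estimate of Lemmas 4.3/4.4. For `δ ∈ (0,1)`,
`p > 1`, and `η : ℝ → ℂⁿ` continuously differentiable with `‖η'‖_{0,p,δ,+} < ∞`, for all
`R₁, R₂ ≥ 0`:
`‖τ_{R₁}η − τ_{R₂}η‖_{0,p,δ,+} ≤ (|e^{-δR₁} − e^{-δR₂}|/δ) ‖η'‖_{0,p,δ,+}`. -/
theorem stmt2 (n : ℕ) (δ p : ℝ) (hδ : δ ∈ Ioo (0:ℝ) 1) (hp : 1 < p)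
    (η : ℝ → (Fin n → ℂ)) (hη : ContDiff ℝ 1 η)
    (hη' : wnormPlus n p δ (deriv η) < ⊤)
    (R₁ R₂ : ℝ) (hR₁ : 0 ≤ R₁) (hR₂ : 0 ≤ R₂) :
    wnormPlus n p δ (fun t => η (t + R₁) - η (t + R₂)) ≤
      ENNReal.ofReal (|Real.exp (-δ * R₁) - Real.exp (-δ * R₂)| / δ) *
        wnormPlus n p δ (deriv η) := by
  have hδ0 := hδ.1
  rcases le_total R₁ R₂ with h | h
  · have hle : Real.exp (-δ * R₂) ≤ Real.exp (-δ * R₁) := Real.exp_le_exp.2 (by nlinarith)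
    rw [abs_of_nonneg (by linarith)]
    have := aux_main n δ p hδ0 hp η hη R₁ R₂ hR₁ h
    unfold wnormPlus at this ⊢
    simpa only [norm_sub_rev] using this
  · have hle : Real.exp (-δ * R₁) ≤ Real.exp (-δ * R₂) := Real.exp_le_exp.2 (by nlinarith)
    rw [abs_of_nonpos (by linarith), neg_sub]
    exact aux_main n δ p hδ0 hp η hη R₂ R₁ hR₂ h
end

section
/- Let δ ∈ (0,1) and p > 1. Suppose η, η₁, η₂, … : ℝ → ℂⁿ are measurable with ‖η‖_{0,p,δ,+} < ∞ and ‖ηₙ − η‖_{0,p,δ,+} → 0, and suppose Rₙ, R ≥ 0 with Rₙ → R. Then ‖ηₙ ∘ τ_{Rₙ} − η ∘ τ_R‖_{0,p,δ,+} → 0, i.e. (∫_0^∞ e^{pδt} ‖ηₙ(t+Rₙ) − η(t+R)‖^p dt)^{1/p} → 0 as n → ∞. -/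
open MeasureTheory Set Filter
open scoped ENNReal Topology

/-- The weighted function, extended by zero to the whole line. -/
noncomputable def wext (n : ℕ) (δ : ℝ) (f : ℝ → (Fin n → ℂ)) : ℝ → (Fin n → ℂ) :=
  (Ioi (0:ℝ)).indicator (fun t => Real.exp (δ * t) • f t)

theorem wext_measurable (n : ℕ) (δ : ℝ) (f : ℝ → (Fin n → ℂ)) (hf : Measurable f) :
    Measurable (wext n δ f) := by
  unfold wext
  refine Measurable.indicator ?_ measurableSet_Ioi
  have h : Measurable fun t : ℝ => Real.exp (δ * t) := by fun_prop
  exact h.smul hf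

theorem wnormPlus_eq (n : ℕ) (p δ : ℝ) (hp : 1 < p) (f : ℝ → (Fin n → ℂ)) :
    wnormPlus n p δ f = eLpNorm (wext n δ f) (ENNReal.ofReal p) volume := by
  have hp0 : 0 < p := by linarith
  unfold wext
  rw [eLpNorm_indicator_eq_eLpNorm_restrict measurableSet_Ioi,
    eLpNorm_eq_lintegral_rpow_enorm_toReal (by simpa using hp0) ENNReal.ofReal_ne_top,
    ENNReal.toReal_ofReal hp0.le]
  unfold wnormPlus
  congr 1
  refine lintegral_congr fun t => ?_
  rw [← ofReal_norm, ENNReal.ofReal_rpow_of_nonneg (norm_nonneg _) hp0.le, norm_smul,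
    Real.norm_of_nonneg (Real.exp_pos _).le,
    Real.mul_rpow (Real.exp_pos _).le (norm_nonneg _), ← Real.exp_mul]
  congr 3
  ring

theorem trans_tendsto (n : ℕ) (p δ : ℝ) (hp : 1 < p) (F : ℝ → (Fin n → ℂ))
    (hF : MemLp F (ENNReal.ofReal p) volume) (R : ℝ) (Rs : ℕ → ℝ)
    (hRconv : Tendsto Rs atTop (𝓝 R)) :
    Tendsto (fun k => eLpNorm (fun t => Real.exp (-(δ * Rs k)) • F (t + Rs k)
      - Real.exp (-(δ * R)) • F (t + R)) (ENNReal.ofReal p) volume) atTop (𝓝 0) := by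
  haveI : Fact (1 ≤ ENNReal.ofReal p) := ⟨by simpa using hp.le⟩
  let g : ℝ → C(ℝ, ℝ) := fun r => ⟨fun t => t + r, by fun_prop⟩
  have hgc : Continuous g := by
    refine ContinuousMap.continuous_of_continuous_uncurry _ ?_
    change Continuous fun q : ℝ × ℝ => q.2 + q.1
    fun_prop
  have hgm : ∀ r, MeasurePreserving (g r) volume volume := fun r =>
    measurePreserving_add_right volume r
  have h1 : Tendsto (fun k => Lp.compMeasurePreserving (g (Rs k)) (hgm _) (hF.toLp F)) atTop
      (𝓝 (Lp.compMeasurePreserving (g R) (hgm _) (hF.toLp F))) :=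
    Filter.Tendsto.compMeasurePreservingLp tendsto_const_nhds
      ((hgc.tendsto R).comp hRconv) (fun k => hgm _) (hgm R) ENNReal.ofReal_ne_top
  have hc : Tendsto (fun k => Real.exp (-(δ * Rs k))) atTop (𝓝 (Real.exp (-(δ * R)))) :=
    (Real.continuous_exp.tendsto _).comp (hRconv.const_mul δ).neg
  have h2 := hc.smul h1
  rw [Lp.tendsto_Lp_iff_tendsto_eLpNorm'] at h2
  refine h2.congr fun k => eLpNorm_congr_ae ?_
  have key : ∀ r, (↑↑(Real.exp (-(δ * r)) • Lp.compMeasurePreserving (g r) (hgm r) (hF.toLp F)) :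
      ℝ → (Fin n → ℂ)) =ᵐ[volume] fun t => Real.exp (-(δ * r)) • F (t + r) := by
    intro r
    have a := (hgm r).quasiMeasurePreserving.ae_eq_comp hF.coeFn_toLp
    filter_upwards [Lp.coeFn_smul (Real.exp (-(δ * r)))
      (Lp.compMeasurePreserving (g r) (hgm r) (hF.toLp F)),
      Lp.coeFn_compMeasurePreserving (hF.toLp F) (hgm r), a] with t h1 h2 h3
    rw [h1, Pi.smul_apply, h2, h3]
    rfl
  filter_upwards [key (Rs k), key R] with t a b
  rw [Pi.sub_apply, a, b]

/-- Lemma 4.3. For `δ ∈ (0,1)`, `p > 1`, measurable `η, η₁, η₂, …`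
with `‖η‖_{0,p,δ,+} < ∞` and `‖ηₖ − η‖_{0,p,δ,+} → 0`, and `Rₖ, R ≥ 0` with `Rₖ → R`,
one has `‖ηₖ ∘ τ_{Rₖ} − η ∘ τ_R‖_{0,p,δ,+} → 0`. -/
theorem stmt3 (n : ℕ) (δ p : ℝ) (hδ : δ ∈ Ioo (0:ℝ) 1) (hp : 1 < p)
    (η : ℝ → (Fin n → ℂ)) (ηs : ℕ → ℝ → (Fin n → ℂ))
    (hη : Measurable η) (hηs : ∀ k, Measurable (ηs k))
    (hηfin : wnormPlus n p δ η < ⊤)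
    (hconv : Tendsto (fun k => wnormPlus n p δ (fun t => ηs k t - η t)) atTop (𝓝 0))
    (R : ℝ) (Rs : ℕ → ℝ) (hR : 0 ≤ R) (hRs : ∀ k, 0 ≤ Rs k)
    (hRconv : Tendsto Rs atTop (𝓝 R)) :
    Tendsto (fun k => wnormPlus n p δ (fun t => ηs k (t + Rs k) - η (t + R)))
      atTop (𝓝 0) := by
  have hF : MemLp (wext n δ η) (ENNReal.ofReal p) volume :=
    ⟨(wext_measurable n δ η hη).aestronglyMeasurable, by rwa [← wnormPlus_eq n p δ hp]⟩
  have hB := trans_tendsto n p δ hp _ hF R Rs hRconv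
  have hsum := hconv.add hB
  rw [add_zero] at hsum
  refine tendsto_of_tendsto_of_tendsto_of_le_of_le tendsto_const_nhds hsum
    (fun _ => zero_le) fun k => ?_
  have hD : Measurable (wext n δ (fun t => ηs k t - η t)) :=
    wext_measurable n δ _ ((hηs k).sub hη)
  have hFm := wext_measurable n δ η hη
  have hmp := measurePreserving_add_right (volume : Measure ℝ) (Rs k)
  have e1 : wnormPlus n p δ (fun t => ηs k t - η t) =
      eLpNorm (wext n δ (fun t => ηs k t - η t) ∘ (fun t => t + Rs k))
        (ENNReal.ofReal p) volume := by
    rw [wnormPlus_eq n p δ hp, eLpNorm_comp_measurePreserving hD.aestronglyMeasurable hmp]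
  have hDc : Measurable (wext n δ (fun t => ηs k t - η t) ∘ (fun t => t + Rs k)) :=
    hD.comp (by fun_prop)
  have hGm : Measurable (fun t => Real.exp (-(δ * Rs k)) • wext n δ η (t + Rs k)
      - Real.exp (-(δ * R)) • wext n δ η (t + R)) := by
    have a1 : Measurable fun t => wext n δ η (t + Rs k) := hFm.comp (by fun_prop)
    have a2 : Measurable fun t => wext n δ η (t + R) := hFm.comp (by fun_prop)
    exact (a1.const_smul (Real.exp (-(δ * Rs k)))).sub (a2.const_smul (Real.exp (-(δ * R))))
  have hle : eLpNorm (Real.exp (-(δ * Rs k)) •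
      (wext n δ (fun t => ηs k t - η t) ∘ (fun t => t + Rs k))) (ENNReal.ofReal p) volume ≤
      wnormPlus n p δ (fun t => ηs k t - η t) := by
    rw [e1]
    refine eLpNorm_mono fun t => ?_
    rw [Pi.smul_apply, norm_smul, Real.norm_of_nonneg (Real.exp_pos _).le]
    refine mul_le_of_le_one_left (norm_nonneg _) (Real.exp_le_one_iff.2 ?_)
    have := mul_nonneg hδ.1.le (hRs k)
    linarith
  refine le_trans ?_ (add_le_add_left hle _)
  refine le_trans ?_ (eLpNorm_add_le (hDc.const_smul _).aestronglyMeasurable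
    hGm.aestronglyMeasurable (by simpa using hp.le))
  rw [wnormPlus_eq n p δ hp]
  refine eLpNorm_mono fun t => ?_
  by_cases ht : 0 < t
  · refine le_of_eq (congrArg _ ?_)
    have ht1 : 0 < t + Rs k := by linarith [hRs k]
    have ht2 : 0 < t + R := by linarith
    have x1 : ∀ r, Real.exp (-(δ * r)) * Real.exp (δ * (t + r)) = Real.exp (δ * t) := by
      intro r
      rw [← Real.exp_add]
      ring_nf
    simp only [wext, Pi.add_apply, Pi.smul_apply, Function.comp, indicator, mem_Ioi, ht, ht1, ht2,
      if_true, smul_smul, x1]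
    rw [smul_sub, smul_sub]
    abel
  · have : wext n δ (fun t => ηs k (t + Rs k) - η (t + R)) t = 0 := by
      simp [wext, ht]
    rw [this, norm_zero]
    exact norm_nonneg _
end

section
/- Let δ ∈ (0,1), p > 1, and let ξ : ℝ → ℂⁿ be continuously differentiable with ‖ξ‖_{1,p,δ,+} := ‖ξ‖_{0,p,δ,+} + ‖ξ'‖_{0,p,δ,+} ≤ 1. Then for every R ≥ 0, ‖ξ ∘ τ_R‖_{0,p,δ,+} = (∫_0^∞ e^{pδt} ‖ξ(t+R)‖^p dt)^{1/p} ≤ e^{-δR}. -/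
open MeasureTheory Set
open scoped ENNReal

/-- Corollary 4.5. For `δ ∈ (0,1)`, `p > 1`, and `ξ : ℝ → ℂⁿ`
continuously differentiable with `‖ξ‖_{1,p,δ,+} = ‖ξ‖_{0,p,δ,+} + ‖ξ'‖_{0,p,δ,+} ≤ 1`,
for every `R ≥ 0` one has `‖ξ ∘ τ_R‖_{0,p,δ,+} ≤ e^{-δR}`. -/
theorem stmt4 (n : ℕ) (δ p : ℝ) (hδ : δ ∈ Ioo (0:ℝ) 1) (hp : 1 < p)
    (ξ : ℝ → (Fin n → ℂ)) (hξ : ContDiff ℝ 1 ξ)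
    (hnorm : wnormPlus n p δ ξ + wnormPlus n p δ (deriv ξ) ≤ 1)
    (R : ℝ) (hR : 0 ≤ R) :
    wnormPlus n p δ (fun t => ξ (t + R)) ≤ ENNReal.ofReal (Real.exp (-δ * R)) := by
  have hp0 : 0 < p := by linarith
  have h1 : wnormPlus n p δ ξ ≤ 1 := le_trans le_self_add hnorm
  set G : ℝ → ℝ≥0∞ := fun t => ENNReal.ofReal (Real.exp (p * δ * t) * ‖ξ t‖ ^ p) with hG
  have hshift : ∫⁻ t in Ioi (0:ℝ), G (t + R) ≤ ∫⁻ t in Ioi (0:ℝ), G t := by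
    rw [← lintegral_indicator measurableSet_Ioi, ← lintegral_indicator measurableSet_Ioi,
      ← lintegral_add_right_eq_self ((Ioi (0:ℝ)).indicator G) R]
    refine lintegral_mono fun t => ?_
    by_cases ht : 0 < t
    · have ht' : 0 < t + R := by linarith
      simp [indicator, ht, ht']
    · simp [indicator, ht]
  have hF : ∀ t : ℝ, ENNReal.ofReal (Real.exp (p * δ * t) * ‖ξ (t + R)‖ ^ p)
      = ENNReal.ofReal (Real.exp (-δ * R * p)) * G (t + R) := by
    intro t
    rw [hG, ← ENNReal.ofReal_mul (Real.exp_pos _).le, ← mul_assoc, ← Real.exp_add]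
    congr 3
    ring_nf
  have hint : (∫⁻ t in Ioi (0:ℝ), G t) ^ (1 / p) ≤ 1 := h1
  unfold wnormPlus
  simp only [hF]
  rw [lintegral_const_mul' _ _ ENNReal.ofReal_ne_top,
    ENNReal.mul_rpow_of_nonneg _ _ (by positivity),
    ENNReal.ofReal_rpow_of_pos (Real.exp_pos _), ← Real.exp_mul]
  have he : -δ * R * p * (1 / p) = -δ * R := by field_simp
  rw [he]
  calc _ ≤ ENNReal.ofReal (Real.exp (-δ * R)) * 1 := by
        gcongr
        exact le_trans (ENNReal.rpow_le_rpow hshift (by positivity)) hint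
    _ = _ := mul_one _
end

section
/- Let δ ∈ (0,1) and p > 1. For every ε > 0 there exists R₀ ≥ 0 such that for all R ≥ R₀ and all continuously differentiable ξ : ℝ → ℂⁿ with ‖ξ‖_{0,p,δ,+} + ‖ξ'‖_{0,p,δ,+} ≤ 1, one has (∫_0^∞ e^{pδt} ‖ξ(t+R)‖^p dt)^{1/p} ≤ ε. -/
open MeasureTheory Set
open scoped ENNReal

/-- Corollary 4.6. For `δ ∈ (0,1)` and `p > 1`: for every `ε > 0` there is
`R₀ ≥ 0` such that for all `R ≥ R₀` and all continuously differentiable `ξ : ℝ → ℂⁿ` with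
`‖ξ‖_{0,p,δ,+} + ‖ξ'‖_{0,p,δ,+} ≤ 1`, one has `‖ξ ∘ τ_R‖_{0,p,δ,+} ≤ ε`;
i.e. `D(R) : ξ ↦ τ_R ξ` tends to `0` in operator norm as `R → ∞`. -/
theorem stmt5 (n : ℕ) (δ p : ℝ) (hδ : δ ∈ Ioo (0:ℝ) 1) (hp : 1 < p) :
    ∀ ε > (0:ℝ), ∃ R₀ : ℝ, 0 ≤ R₀ ∧ ∀ R ≥ R₀,
      ∀ ξ : ℝ → (Fin n → ℂ), ContDiff ℝ 1 ξ →
        wnormPlus n p δ ξ + wnormPlus n p δ (deriv ξ) ≤ 1 →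
        wnormPlus n p δ (fun t => ξ (t + R)) ≤ ENNReal.ofReal ε := by
  intro ε hε
  obtain ⟨hδ0, -⟩ := hδ
  have hp0 : 0 < p := by linarith
  refine ⟨max 0 (-Real.log ε / δ), le_max_left _ _, ?_⟩
  intro R hR ξ _ hξ
  have hR0 : 0 ≤ R := le_trans (le_max_left _ _) hR
  have hR1 : -Real.log ε / δ ≤ R := le_trans (le_max_right _ _) hR
  have h1 : wnormPlus n p δ ξ ≤ 1 := le_trans le_self_add hξ
  have hexp : Real.exp (-(δ * R)) ≤ ε := by
    rw [← Real.le_log_iff_exp_le hε]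
    rw [div_le_iff₀ hδ0] at hR1
    linarith
  -- the integrand
  set F : ℝ → ℝ≥0∞ := fun t => ENNReal.ofReal (Real.exp (p * δ * t) * ‖ξ t‖ ^ p) with hF
  have hshift : ∫⁻ t in Ioi (0:ℝ), F (t + R) ≤ ∫⁻ t in Ioi (0:ℝ), F t := by
    rw [← lintegral_indicator measurableSet_Ioi, ← lintegral_indicator measurableSet_Ioi,
      ← lintegral_add_right_eq_self ((Ioi (0:ℝ)).indicator F) R]
    refine lintegral_mono fun t => ?_
    by_cases ht : t ∈ Ioi (0:ℝ)
    · have ht' : t + R ∈ Ioi (0:ℝ) := by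
        simp only [mem_Ioi] at ht ⊢
        linarith
      simp only [indicator_of_mem ht, indicator_of_mem ht', le_refl]
    · simp [indicator_of_notMem ht]
  have hmul : ∀ t, ENNReal.ofReal (Real.exp (p * δ * t) * ‖ξ (t + R)‖ ^ p)
      = ENNReal.ofReal (Real.exp (-(δ * R)) ^ p) * F (t + R) := by
    intro t
    rw [hF]
    simp only
    rw [← ENNReal.ofReal_mul (by positivity), ← mul_assoc, ← Real.exp_mul, ← Real.exp_add]
    congr 3
    ring_nf
  calc wnormPlus n p δ (fun t => ξ (t + R))
      = (ENNReal.ofReal (Real.exp (-(δ * R)) ^ p) * ∫⁻ t in Ioi (0:ℝ), F (t + R)) ^ (1 / p) := by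
        unfold wnormPlus
        simp only [hmul]
        rw [lintegral_const_mul' _ _ ENNReal.ofReal_ne_top]
    _ ≤ (ENNReal.ofReal (Real.exp (-(δ * R)) ^ p) * ∫⁻ t in Ioi (0:ℝ), F t) ^ (1 / p) := by
        gcongr
    _ = ENNReal.ofReal (Real.exp (-(δ * R))) * wnormPlus n p δ ξ := by
        rw [ENNReal.mul_rpow_of_nonneg _ _ (by positivity),
          ← ENNReal.ofReal_rpow_of_nonneg (Real.exp_pos _).le hp0.le, ← ENNReal.rpow_mul,
          mul_one_div_cancel hp0.ne', ENNReal.rpow_one]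
        rfl
    _ ≤ ENNReal.ofReal ε * 1 := by
        gcongr
    _ = ENNReal.ofReal ε := mul_one _
end

section
/- Let δ ∈ (0,1), p > 1, R > 0, and let u : ℝ → ℂⁿ be continuously differentiable with ‖u‖_{0,p,δ,+} < ∞ and ‖u'‖_{0,p,δ,+} < ∞. Then lim_{s → 0} (1/|s|) · (∫_0^∞ e^{pδt} ‖u(t+R+s) − u(t+R) − s·u'(t+R)‖^p dt)^{1/p} = 0; that is, the map s ↦ u ∘ τ_{R+s} into the weighted L^p space is differentiable at s = 0 with derivative u' ∘ τ_R. -/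
open MeasureTheory Set Filter
open scoped ENNReal Topology

/-- The weighted density of `f` (extended nonnegative). -/
noncomputable def wd (n : ℕ) (p δ : ℝ) (t : ℝ) (x : Fin n → ℂ) : ℝ≥0∞ :=
  ENNReal.ofReal (Real.exp (p * δ * t)) * ‖x‖ₑ ^ p

lemma wd_eq (n : ℕ) (p δ : ℝ) (hp : 1 < p) (t : ℝ) (x : Fin n → ℂ) :
    ENNReal.ofReal (Real.exp (p * δ * t) * ‖x‖ ^ p) = wd n p δ t x := by
  rw [wd, ENNReal.ofReal_mul (Real.exp_pos _).le,
    ← ENNReal.ofReal_rpow_of_nonneg (norm_nonneg _) (by linarith), ofReal_norm]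

lemma wd_meas (n : ℕ) (p δ : ℝ) (f : ℝ → (Fin n → ℂ)) (hf : Continuous f) :
    Measurable (fun t => wd n p δ t (f t)) := by
  unfold wd
  have := hf.measurable
  fun_prop

lemma jensen01 {n : ℕ} (p : ℝ) (hp : 1 < p) (g : ℝ → (Fin n → ℂ)) (hg : Continuous g) :
    ‖∫ r in (0:ℝ)..1, g r‖ₑ ^ p ≤ ∫⁻ r in Ioc (0:ℝ) 1, ‖g r‖ₑ ^ p := by
  have hpp : 0 < p := by linarith
  rw [intervalIntegral.integral_of_le zero_le_one]
  have h1 : ‖∫ r in Ioc (0:ℝ) 1, g r‖ₑ ≤ ∫⁻ r in Ioc (0:ℝ) 1, ‖g r‖ₑ :=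
    enorm_integral_le_lintegral_enorm _
  haveI : IsProbabilityMeasure (volume.restrict (Ioc (0:ℝ) 1)) := ⟨by simp⟩
  have h2 := eLpNorm_le_eLpNorm_of_exponent_le (μ := volume.restrict (Ioc (0:ℝ) 1))
    (p := 1) (q := ENNReal.ofReal p) (by rw [← ENNReal.ofReal_one]; exact ENNReal.ofReal_le_ofReal hp.le)
    hg.aestronglyMeasurable
  rw [eLpNorm_one_eq_lintegral_enorm, eLpNorm_eq_lintegral_rpow_enorm_toReal
    (by simpa using hpp) (by simp), ENNReal.toReal_ofReal hpp.le] at h2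
  calc _ ≤ ((∫⁻ r in Ioc (0:ℝ) 1, ‖g r‖ₑ ^ p) ^ (1/p)) ^ p :=
        ENNReal.rpow_le_rpow (h1.trans h2) hpp.le
    _ = _ := by rw [← ENNReal.rpow_mul, one_div_mul_cancel hpp.ne', ENNReal.rpow_one]

lemma taylor01 {n : ℕ} (u : ℝ → (Fin n → ℂ)) (hu : ContDiff ℝ 1 u) (a s : ℝ) :
    u (a + s) - u a - s • deriv u a = s • ∫ r in (0:ℝ)..1, (deriv u (a + r * s) - deriv u a) := by
  have hv : Continuous (deriv u) := hu.continuous_deriv le_rfl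
  have hd : ∀ x, HasDerivAt u (deriv u x) x := fun x =>
    (hu.differentiable one_ne_zero x).hasDerivAt
  have h : ∫ r in (0:ℝ)..1, s • deriv u (a + r * s) = u (a + 1 * s) - u (a + 0 * s) := by
    apply intervalIntegral.integral_eq_sub_of_hasDerivAt (f := fun r => u (a + r * s))
    · intro r _
      have h1 : HasDerivAt (fun r : ℝ => a + r * s) s r := by
        simpa using ((hasDerivAt_id r).mul_const s).const_add a
      exact (hd _).scomp r h1
    · apply Continuous.intervalIntegrable
      fun_prop
  rw [intervalIntegral.integral_sub (Continuous.intervalIntegrable (by fun_prop) _ _)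
    (Continuous.intervalIntegrable (by fun_prop) _ _), smul_sub,
    ← intervalIntegral.integral_smul, h]
  simp

lemma tail_zero (w : ℝ → ℝ≥0∞) (hw : Measurable w) (hfin : ∫⁻ t in Ioi (0:ℝ), w t ≠ ⊤) :
    Tendsto (fun T : ℝ => ∫⁻ t in Ioi T, w t) atTop (𝓝 0) := by
  have h : Tendsto (fun T : ℝ => ∫⁻ t in Ioi (0:ℝ), (Ioi T).indicator w t) atTop
      (𝓝 (∫⁻ t in Ioi (0:ℝ), 0)) := by
    apply tendsto_lintegral_filter_of_dominated_convergence w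
    · exact Eventually.of_forall fun T => hw.indicator measurableSet_Ioi
    · exact Eventually.of_forall fun T => Eventually.of_forall fun t => indicator_le_self _ _ _
    · exact hfin
    · refine Eventually.of_forall fun t => ?_
      apply tendsto_const_nhds.congr'
      filter_upwards [eventually_ge_atTop t] with T hT
      simp [hT]
  rw [lintegral_zero] at h
  apply h.congr'
  filter_upwards [eventually_ge_atTop 0] with T hT
  rw [lintegral_indicator measurableSet_Ioi, Measure.restrict_restrict measurableSet_Ioi]
  congr 2
  ext x
  simp only [mem_inter_iff, mem_Ioi]
  exact ⟨fun h => h.1, fun h => ⟨h, hT.trans_lt h⟩⟩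

lemma shift_tail (w : ℝ → ℝ≥0∞) (T h : ℝ) (hh : 0 ≤ h) :
    ∫⁻ t in Ioi T, w (t + h) ≤ ∫⁻ t in Ioi T, w t := by
  have h1 : ∫⁻ t in Ioi T, w (t + h) = ∫⁻ t in Ioi (T + h), w t := by
    rw [← lintegral_indicator measurableSet_Ioi, ← lintegral_indicator measurableSet_Ioi,
      ← lintegral_add_right_eq_self ((Ioi (T + h)).indicator w) h]
    congr 1
    ext t
    simp [indicator]
  rw [h1]
  exact lintegral_mono_set (Ioi_subset_Ioi (by linarith))

lemma wd_shift (n : ℕ) (p δ : ℝ) (hp : 0 ≤ p * δ) (t h : ℝ) (hh : 0 ≤ h) (x : Fin n → ℂ) :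
    wd n p δ t x ≤ wd n p δ (t + h) x := by
  unfold wd
  gcongr
  linarith

lemma wd_sub (n : ℕ) (p δ : ℝ) (hp : 1 < p) (t : ℝ) (x y : Fin n → ℂ) :
    wd n p δ t (x - y) ≤ 2 ^ (p - 1) * (wd n p δ t x + wd n p δ t y) := by
  unfold wd
  calc _ ≤ ENNReal.ofReal (Real.exp (p * δ * t)) * (‖x‖ₑ + ‖y‖ₑ) ^ p := by
        gcongr
        exact enorm_sub_le
    _ ≤ ENNReal.ofReal (Real.exp (p * δ * t)) * (2 ^ (p - 1) * (‖x‖ₑ ^ p + ‖y‖ₑ ^ p)) := by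
        gcongr
        exact ENNReal.rpow_add_le_mul_rpow_add_rpow _ _ hp.le
    _ = _ := by ring

lemma trans_zero (n : ℕ) (δ p : ℝ) (hδ : 0 < δ) (hp : 1 < p) (R : ℝ) (hR : 0 < R)
    (v : ℝ → (Fin n → ℂ)) (hv : Continuous v)
    (hfin : ∫⁻ t in Ioi (0:ℝ), wd n p δ t (v t) ≠ ⊤) :
    Tendsto (fun h : ℝ => ∫⁻ t in Ioi (0:ℝ), wd n p δ t (v (t + R + h) - v (t + R)))
      (𝓝 0) (𝓝 0) := by
  have hpp : 0 < p := by linarith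
  have hpd : 0 ≤ p * δ := by positivity
  rw [ENNReal.tendsto_nhds_zero]
  intro ε hε
  set C : ℝ≥0∞ := 2 ^ (p - 1) * 2 with hC
  have hCtop : C ≠ ⊤ := ENNReal.mul_ne_top (ENNReal.rpow_ne_top_of_nonneg (by linarith) (by simp)) (by simp)
  have htail : Tendsto (fun T : ℝ => C * ∫⁻ t in Ioi T, wd n p δ t (v t)) atTop (𝓝 0) := by
    have := ENNReal.Tendsto.const_mul (a := C) (tail_zero _ (wd_meas n p δ v hv) hfin) (Or.inr hCtop)
    simpa using this
  have hε2 : 0 < ε / 2 := ENNReal.half_pos hε.ne'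
  obtain ⟨T, hT, hT0⟩ := ((ENNReal.tendsto_nhds_zero.1 htail _ hε2).and
    (eventually_ge_atTop (0:ℝ))).exists
  -- the compact part
  have hcomp : Tendsto (fun h : ℝ => ∫⁻ t in Ioc (0:ℝ) T, wd n p δ t (v (t + R + h) - v (t + R)))
      (𝓝 0) (𝓝 (∫⁻ t in Ioc (0:ℝ) T, 0)) := by
    obtain ⟨M, hM⟩ := (isCompact_Icc (a := (0:ℝ)) (b := T + R + R)).exists_bound_of_continuousOn
      hv.continuousOn
    apply tendsto_lintegral_filter_of_dominated_convergence
      (fun _ => ENNReal.ofReal (Real.exp (p * δ * T)) * (ENNReal.ofReal (M + M)) ^ p)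
    · exact Eventually.of_forall fun h => wd_meas n p δ _ (by fun_prop)
    · filter_upwards [Metric.ball_mem_nhds (0:ℝ) hR] with h hh
      rw [mem_ball_zero_iff, Real.norm_eq_abs, abs_lt] at hh
      refine (ae_restrict_iff' measurableSet_Ioc).2 (Eventually.of_forall fun t ht => ?_)
      unfold wd
      gcongr
      · exact ht.2
      · rw [← ofReal_norm]
        apply ENNReal.ofReal_le_ofReal
        refine (norm_sub_le _ _).trans (add_le_add (hM _ ⟨?_, ?_⟩) (hM _ ⟨?_, ?_⟩)) <;>
          linarith [ht.1, ht.2, hh.1, hh.2]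
    · rw [lintegral_const]
      refine ENNReal.mul_ne_top (ENNReal.mul_ne_top (by simp)
        (ENNReal.rpow_ne_top_of_nonneg hpp.le (by simp))) (by simp)
    · refine Eventually.of_forall fun t => ?_
      have hc : Tendsto (fun h : ℝ => ‖v (t + R + h) - v (t + R)‖ₑ) (𝓝 0) (𝓝 0) := by
        have : Continuous (fun h : ℝ => ‖v (t + R + h) - v (t + R)‖ₑ) := by fun_prop
        simpa using this.tendsto 0
      have h2 := (ENNReal.continuous_rpow_const (y := p)).tendsto 0 |>.comp hc
      have h3 := ENNReal.Tendsto.const_mul (a := ENNReal.ofReal (Real.exp (p * δ * t))) h2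
        (Or.inr (by simp))
      simpa [ENNReal.zero_rpow_of_pos hpp, wd, Function.comp_def] using h3
  rw [lintegral_zero] at hcomp
  filter_upwards [ENNReal.tendsto_nhds_zero.1 hcomp _ hε2, Metric.ball_mem_nhds (0:ℝ) hR] with h h1 hh
  rw [mem_ball_zero_iff, Real.norm_eq_abs, abs_lt] at hh
  rw [← Ioc_union_Ioi_eq_Ioi hT0]
  refine (lintegral_union_le _ _ _).trans ?_
  rw [← ENNReal.add_halves ε]
  refine add_le_add h1 (le_trans ?_ hT)
  have hm1 : Measurable fun t => wd n p δ (t + (R + h)) (v (t + (R + h))) :=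
    (wd_meas n p δ v hv).comp (measurable_add_const _)
  have hm2 : Measurable fun t => wd n p δ (t + R) (v (t + R)) :=
    (wd_meas n p δ v hv).comp (measurable_add_const _)
  calc _ ≤ ∫⁻ t in Ioi T, 2 ^ (p - 1) * (wd n p δ (t + (R + h)) (v (t + (R + h)))
            + wd n p δ (t + R) (v (t + R))) := by
        apply lintegral_mono
        intro t
        refine (wd_sub n p δ hp _ _ _).trans ?_
        rw [add_assoc t R h]
        exact mul_le_mul_right (add_le_add (wd_shift n p δ hpd _ _ (by linarith) _)
          (wd_shift n p δ hpd _ _ hR.le _)) _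
    _ = 2 ^ (p - 1) * ((∫⁻ t in Ioi T, wd n p δ (t + (R + h)) (v (t + (R + h))))
          + ∫⁻ t in Ioi T, wd n p δ (t + R) (v (t + R))) := by
        rw [← lintegral_add_left hm1, ← lintegral_const_mul _ (hm1.fun_add hm2)]
    _ ≤ 2 ^ (p - 1) * ((∫⁻ t in Ioi T, wd n p δ t (v t)) + ∫⁻ t in Ioi T, wd n p δ t (v t)) := by
        gcongr 2 ^ (p - 1) * (?_ + ?_)
        · exact shift_tail (fun t => wd n p δ t (v t)) T (R + h) (by linarith)
        · exact shift_tail (fun t => wd n p δ t (v t)) T R hR.le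
    _ = _ := by rw [hC, ← two_mul, mul_assoc]

lemma main_bound (n : ℕ) (δ p : ℝ) (hp : 1 < p) (R : ℝ)
    (u : ℝ → (Fin n → ℂ)) (hu : ContDiff ℝ 1 u) (s : ℝ) :
    ∫⁻ t in Ioi (0:ℝ), wd n p δ t (u (t + R + s) - u (t + R) - s • deriv u (t + R)) ≤
      ‖s‖ₑ ^ p * ∫⁻ r in Ioc (0:ℝ) 1, ∫⁻ t in Ioi (0:ℝ),
        wd n p δ t (deriv u (t + R + r * s) - deriv u (t + R)) := by
  have hpp : 0 < p := by linarith
  have hv : Continuous (deriv u) := hu.continuous_deriv le_rfl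
  have hm : Measurable (Function.uncurry fun t r : ℝ =>
      wd n p δ t (deriv u (t + R + r * s) - deriv u (t + R))) := by
    have hc : Continuous fun q : ℝ × ℝ => deriv u (q.1 + R + q.2 * s) - deriv u (q.1 + R) := by
      fun_prop
    have := hc.measurable
    unfold wd Function.uncurry
    fun_prop
  rw [← lintegral_lintegral_swap hm.aemeasurable, ← lintegral_const_mul _ hm.lintegral_prod_right]
  apply lintegral_mono
  intro t
  have hc : Continuous fun r : ℝ => deriv u (t + R + r * s) - deriv u (t + R) := by fun_prop
  have hcm := hc.measurable
  simp only
  rw [taylor01 u hu]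
  unfold wd
  rw [enorm_smul, ENNReal.mul_rpow_of_nonneg _ _ hpp.le, lintegral_const_mul _ (by fun_prop)]
  calc _ = ‖s‖ₑ ^ p * (ENNReal.ofReal (Real.exp (p * δ * t)) *
          ‖∫ r in (0:ℝ)..1, (deriv u (t + R + r * s) - deriv u (t + R))‖ₑ ^ p) := by ring
    _ ≤ _ := by
      gcongr
      exact jensen01 p hp _ hc

theorem stmt6 (n : ℕ) (δ p : ℝ) (hδ : δ ∈ Ioo (0:ℝ) 1) (hp : 1 < p) (R : ℝ) (hR : 0 < R)
    (u : ℝ → (Fin n → ℂ)) (hu : ContDiff ℝ 1 u)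
    (hufin : wnormPlus n p δ u < ⊤) (hu'fin : wnormPlus n p δ (deriv u) < ⊤) :
    Tendsto
      (fun s : ℝ => (1 / |s|) *
        (wnormPlus n p δ (fun t => u (t + R + s) - u (t + R) - s • deriv u (t + R))).toReal)
      (𝓝[≠] (0:ℝ)) (𝓝 0) := by
  have hpp : 0 < p := by linarith
  have hv : Continuous (deriv u) := hu.continuous_deriv le_rfl
  simp only [wnormPlus, wd_eq n p δ hp] at hu'fin ⊢
  have hfin : ∫⁻ t in Ioi (0:ℝ), wd n p δ t (deriv u t) ≠ ⊤ := by
    intro h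
    rw [h, ENNReal.top_rpow_of_pos (by positivity)] at hu'fin
    exact lt_irrefl _ hu'fin
  have hG := trans_zero n δ p hδ.1 hp R hR _ hv hfin
  rw [Metric.tendsto_nhds]
  intro ε hε
  have hε2 : 0 < ε / 2 := by positivity
  have hev := ENNReal.tendsto_nhds_zero.1 hG (ENNReal.ofReal (ε / 2) ^ p)
    (ENNReal.rpow_pos (by simpa using hε2) (by simp))
  obtain ⟨η, hη, hball⟩ := Metric.eventually_nhds_iff_ball.1 hev
  filter_upwards [self_mem_nhdsWithin, nhdsWithin_le_nhds (Metric.ball_mem_nhds (0:ℝ) hη)] with s hs0 hs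
  have hs0 : s ≠ 0 := hs0
  have habs : 0 < |s| := abs_pos.2 hs0
  rw [mem_ball_zero_iff, Real.norm_eq_abs] at hs
  have hI := main_bound n δ p hp R u hu s
  have hJ : ∫⁻ r in Ioc (0:ℝ) 1, ∫⁻ t in Ioi (0:ℝ),
        wd n p δ t (deriv u (t + R + r * s) - deriv u (t + R)) ≤ ENNReal.ofReal (ε / 2) ^ p := by
    calc _ ≤ ∫⁻ r in Ioc (0:ℝ) 1, ENNReal.ofReal (ε / 2) ^ p := by
          apply setLIntegral_mono measurable_const
          intro r hr
          apply hball
          rw [mem_ball_zero_iff, Real.norm_eq_abs, abs_mul, abs_of_pos hr.1]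
          nlinarith [hr.1, hr.2]
      _ = _ := by simp
  have hK := ENNReal.rpow_le_rpow (hI.trans (mul_le_mul_right hJ _)) (z := 1 / p) (by positivity)
  rw [← ENNReal.mul_rpow_of_nonneg _ _ hpp.le, ← ENNReal.rpow_mul, mul_one_div_cancel hpp.ne',
    ENNReal.rpow_one, ← ofReal_norm, ← ENNReal.ofReal_mul (norm_nonneg _)] at hK
  have hL := ENNReal.toReal_le_of_le_ofReal (by positivity) hK
  rw [Real.norm_eq_abs] at hL
  rw [Real.dist_eq, sub_zero, abs_of_nonneg (by positivity)]
  calc _ ≤ 1 / |s| * (|s| * (ε / 2)) := by gcongr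
    _ = ε / 2 := by field_simp
    _ < ε := by linarith
end

section
/- Let δ ∈ (0,1), p > 1, R > 0, and let u : ℝ → ℂⁿ be continuously differentiable with ‖u'‖_{0,p,δ,+} < ∞. Then for every s with |s| < R, (∫_0^∞ e^{pδt} ‖u(t+R+s) − u(t+R) − s·u'(t+R)‖^p dt)^{1/p} ≤ |s| · ∫_0^1 (∫_0^∞ e^{pδt} ‖u'(t+vs+R) − u'(t+R)‖^p dt)^{1/p} dv. -/
open MeasureTheory Set
open scoped ENNReal

theorem minkowski_aux {α β : Type*} [MeasurableSpace α] [MeasurableSpace β]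
    (μ : Measure α) (ν : Measure β) [SFinite μ] [SFinite ν] (p : ℝ) (hp : 1 < p)
    (F : α → β → ℝ≥0∞) (hF : Measurable (Function.uncurry F))
    (hfin : ∫⁻ t, (∫⁻ v, F t v ∂ν) ^ p ∂μ ≠ ⊤) :
    (∫⁻ t, (∫⁻ v, F t v ∂ν) ^ p ∂μ) ^ (1 / p) ≤ ∫⁻ v, (∫⁻ t, F t v ^ p ∂μ) ^ (1 / p) ∂ν := by
  set G : α → ℝ≥0∞ := fun t => ∫⁻ v, F t v ∂ν with hG
  have hGm : Measurable G := hF.lintegral_prod_right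
  set A := ∫⁻ t, G t ^ p ∂μ with hA
  have hp0 : 0 < p := by linarith
  rcases eq_or_ne A 0 with h0 | h0
  · rw [h0, ENNReal.zero_rpow_of_pos (by positivity)]; exact zero_le
  have hq : p.HolderConjugate (p / (p - 1)) := Real.HolderConjugate.conjExponent hp
  have h1 : A ≤ A ^ (1 / (p / (p - 1))) * ∫⁻ v, (∫⁻ t, F t v ^ p ∂μ) ^ (1 / p) ∂ν := by
    calc A = ∫⁻ t, ∫⁻ v, F t v * G t ^ (p - 1) ∂ν ∂μ := by
            refine lintegral_congr fun t => ?_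
            have hm : Measurable fun v => F t v := hF.comp measurable_prodMk_left
            rw [lintegral_mul_const _ hm]
            change G t ^ p = G t * G t ^ (p - 1)
            have e := ENNReal.rpow_add_of_nonneg (x := G t) 1 (p - 1) zero_le_one (by linarith)
            rw [ENNReal.rpow_one, add_sub_cancel] at e
            exact e
      _ = ∫⁻ v, ∫⁻ t, F t v * G t ^ (p - 1) ∂μ ∂ν := by
            apply lintegral_lintegral_swap
            exact (hF.mul ((hGm.comp measurable_fst).pow_const _)).aemeasurable
      _ ≤ ∫⁻ v, (∫⁻ t, F t v ^ p ∂μ) ^ (1 / p) * A ^ (1 / (p / (p - 1))) ∂ν := by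
            refine lintegral_mono fun v => ?_
            have := ENNReal.lintegral_mul_le_Lp_mul_Lq μ hq
              (f := fun t => F t v) (g := fun t => G t ^ (p - 1))
              (hF.comp measurable_prodMk_right).aemeasurable (hGm.pow_const _).aemeasurable
            refine this.trans (le_of_eq ?_)
            congr 2
            refine lintegral_congr fun t => ?_
            rw [← ENNReal.rpow_mul]
            congr 1
            have : p - 1 ≠ 0 := by linarith
            field_simp
      _ = _ := by
            rw [lintegral_mul_const', mul_comm]
            exact ENNReal.rpow_ne_top_of_nonneg (by have := hq.symm.pos; positivity) hfin
  have h2 : A = A ^ (1 / (p / (p - 1))) * A ^ (1 / p) := by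
    rw [← ENNReal.rpow_add _ _ h0 hfin]
    have : 1 / (p / (p - 1)) + 1 / p = 1 := by
      have : p - 1 ≠ 0 := by linarith
      field_simp; ring
    rw [this, ENNReal.rpow_one]
  have h3 : A ^ (1 / (p / (p - 1))) * A ^ (1 / p) ≤
    A ^ (1 / (p / (p - 1))) * ∫⁻ v, (∫⁻ t, F t v ^ p ∂μ) ^ (1 / p) ∂ν := by rw [← h2]; exact h1
  refine (ENNReal.mul_le_mul_iff_right ?_ ?_).1 h3
  · exact (ENNReal.rpow_pos (pos_iff_ne_zero.2 h0) hfin).ne'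
  · exact ENNReal.rpow_ne_top_of_nonneg (by have := hq.symm.pos; positivity) hfin

theorem wnorm_eq (n : ℕ) (p δ : ℝ) (hp : 1 < p) (f : ℝ → (Fin n → ℂ)) :
    wnormPlus n p δ f =
      (∫⁻ t in Ioi (0:ℝ), (ENNReal.ofReal (Real.exp (δ * t)) * ‖f t‖ₑ) ^ p) ^ (1 / p) := by
  unfold wnormPlus
  congr 1
  refine lintegral_congr fun t => ?_
  rw [← ofReal_norm, ← ENNReal.ofReal_mul (Real.exp_pos _).le,
    ENNReal.ofReal_rpow_of_nonneg (by positivity) (by linarith),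
    Real.mul_rpow (Real.exp_pos _).le (norm_nonneg _), ← Real.exp_mul]
  have e : p * δ * t = δ * t * p := by ring
  rw [e]

theorem mink_cont (p : ℝ) (hp : 1 < p) (F : ℝ → ℝ → ℝ≥0∞)
    (hF : Continuous (Function.uncurry F)) (hFt : ∀ t v, F t v ≠ ⊤) :
    (∫⁻ t in Ioi (0:ℝ), (∫⁻ v in Icc (0:ℝ) 1, F t v) ^ p) ^ (1 / p) ≤
      ∫⁻ v in Icc (0:ℝ) 1, (∫⁻ t in Ioi (0:ℝ), F t v ^ p) ^ (1 / p) := by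
  have hp0 : 0 < p := by linarith
  rw [one_div, ENNReal.rpow_inv_le_iff hp0]
  have hU : Ioi (0:ℝ) = ⋃ N : ℕ, Ioc (0:ℝ) N := by
    ext t
    simp only [mem_Ioi, mem_iUnion, mem_Ioc]
    exact ⟨fun h => (exists_nat_ge t).imp fun N hN => ⟨h, hN⟩, fun ⟨_, h, _⟩ => h⟩
  have hmono : Monotone fun N : ℕ => Ioc (0:ℝ) N := fun a b hab =>
    Ioc_subset_Ioc_right (by exact_mod_cast hab)
  conv_lhs => rw [hU]
  rw [setLIntegral_iUnion_of_directed _ hmono.directed_le]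
  refine iSup_le fun N => ?_
  rw [← ENNReal.rpow_inv_le_iff hp0, ← one_div]
  refine (minkowski_aux (volume.restrict (Ioc (0:ℝ) N)) (volume.restrict (Icc (0:ℝ) 1)) p hp F
    hF.measurable ?_).trans ?_
  · obtain ⟨x, -, hx⟩ := (isCompact_Icc.prod isCompact_Icc :
      IsCompact (Icc (0:ℝ) N ×ˢ Icc (0:ℝ) 1)).exists_isMaxOn
        ⟨(0, 0), by simp⟩ hF.continuousOn
    have hb : ∀ t ∈ Ioc (0:ℝ) N, (∫⁻ v in Icc (0:ℝ) 1, F t v) ^ p ≤ F x.1 x.2 ^ p := by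
      intro t ht
      refine ENNReal.rpow_le_rpow ?_ hp0.le
      calc (∫⁻ v in Icc (0:ℝ) 1, F t v) ≤ ∫⁻ v in Icc (0:ℝ) 1, F x.1 x.2 :=
            setLIntegral_mono' measurableSet_Icc fun v hv =>
              hx (show (t, v) ∈ _ from ⟨⟨ht.1.le, ht.2⟩, hv⟩)
        _ = _ := by simp
    refine ne_top_of_le_ne_top ?_ (setLIntegral_mono' measurableSet_Ioc hb)
    rw [setLIntegral_const]
    refine ENNReal.mul_ne_top (ENNReal.rpow_ne_top_of_nonneg hp0.le (hFt _ _)) ?_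
    simp
  · gcongr
    exact fun t ht => ht.1

/-- difference-quotient inequality of Lemmas 4.8/4.9. For `δ ∈ (0,1)`,
`p > 1`, `R > 0`, `u : ℝ → ℂⁿ` continuously differentiable with `‖u'‖_{0,p,δ,+} < ∞`,
and every `s` with `|s| < R`:
`‖u∘τ_{R+s} − u∘τ_R − s·u'∘τ_R‖_{0,p,δ,+} ≤ |s| ∫_0^1 ‖u'∘τ_{vs+R} − u'∘τ_R‖_{0,p,δ,+} dv`. -/
theorem stmt7 (n : ℕ) (δ p : ℝ) (hδ : δ ∈ Ioo (0:ℝ) 1) (hp : 1 < p) (R : ℝ) (hR : 0 < R)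
    (u : ℝ → (Fin n → ℂ)) (hu : ContDiff ℝ 1 u)
    (hu'fin : wnormPlus n p δ (deriv u) < ⊤)
    (s : ℝ) (hs : |s| < R) :
    wnormPlus n p δ (fun t => u (t + R + s) - u (t + R) - s • deriv u (t + R)) ≤
      ENNReal.ofReal |s| *
        ∫⁻ v in Icc (0:ℝ) 1,
          wnormPlus n p δ (fun t => deriv u (t + v * s + R) - deriv u (t + R)) := by
  have hp0 : 0 < p := by linarith
  have hc : Continuous (deriv u) := hu.continuous_deriv le_rfl
  have hd : Differentiable ℝ u := hu.differentiable (by norm_num)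
  simp only [wnorm_eq n p δ hp]
  have hFc : Continuous (Function.uncurry fun t v : ℝ => ENNReal.ofReal (Real.exp (δ * t)) *
      ‖deriv u (t + v * s + R) - deriv u (t + R)‖ₑ) := by
    have : (Function.uncurry fun t v : ℝ => ENNReal.ofReal (Real.exp (δ * t)) *
      ‖deriv u (t + v * s + R) - deriv u (t + R)‖ₑ) = fun x : ℝ × ℝ => ENNReal.ofReal
        (Real.exp (δ * x.1) * ‖deriv u (x.1 + x.2 * s + R) - deriv u (x.1 + R)‖) := by
      ext ⟨t, v⟩
      simp only [Function.uncurry]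
      rw [← ofReal_norm, ← ENNReal.ofReal_mul (Real.exp_pos _).le]
    rw [this]
    refine ENNReal.continuous_ofReal.comp ?_
    fun_prop
  have key := mink_cont p hp _ hFc (fun t v => ENNReal.mul_ne_top ENNReal.ofReal_ne_top enorm_ne_top)
  refine le_trans ?_ (mul_le_mul_right key _)
  have hs' : ENNReal.ofReal |s| = (ENNReal.ofReal |s| ^ p) ^ (1 / p) := by
    rw [← ENNReal.rpow_mul, mul_one_div_cancel hp0.ne', ENNReal.rpow_one]
  rw [hs', ← ENNReal.mul_rpow_of_nonneg _ _ (by positivity),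
    ← lintegral_const_mul' _ _ (ENNReal.rpow_ne_top_of_nonneg hp0.le ENNReal.ofReal_ne_top)]
  refine ENNReal.rpow_le_rpow (lintegral_mono fun t => ?_) (by positivity)
  rw [← ENNReal.mul_rpow_of_nonneg _ _ hp0.le]
  refine ENNReal.rpow_le_rpow ?_ hp0.le
  rw [lintegral_const_mul' _ _ ENNReal.ofReal_ne_top, mul_left_comm]
  gcongr
  have hint : u (t + R + s) - u (t + R) - s • deriv u (t + R) =
      s • ∫ v in (0:ℝ)..1, (deriv u (t + v * s + R) - deriv u (t + R)) := by
    have h1 : ∫ v in (0:ℝ)..1, s • (deriv u (t + v * s + R) - deriv u (t + R)) =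
        (u (t + 1 * s + R) - (1:ℝ) • s • deriv u (t + R)) -
          (u (t + 0 * s + R) - (0:ℝ) • s • deriv u (t + R)) := by
      refine intervalIntegral.integral_eq_sub_of_hasDerivAt
        (f := fun v : ℝ => u (t + v * s + R) - v • s • deriv u (t + R)) (fun v _ => ?_) ?_
      · rw [smul_sub]
        have ha : HasDerivAt (fun v : ℝ => t + v * s + R) s v := by
          simpa using (((hasDerivAt_id v).mul_const s).const_add t).add_const R
        have hb := (hd (t + v * s + R)).hasDerivAt.scomp v ha
        have hc := (hasDerivAt_id v).smul_const (s • deriv u (t + R))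
        have hbc := hb.sub hc
        rw [one_smul] at hbc
        exact hbc
      · refine Continuous.intervalIntegrable ?_ _ _
        fun_prop
    rw [← intervalIntegral.integral_smul, h1]
    have e : t + 1 * s + R = t + R + s := by ring
    rw [e]
    simp only [zero_mul, add_zero, one_smul, zero_smul, sub_zero]
    abel
  rw [hint, enorm_smul, Real.enorm_eq_ofReal_abs, intervalIntegral.integral_of_le zero_le_one,
    ← integral_Icc_eq_integral_Ioc]
  gcongr
  exact enorm_integral_le_lintegral_enorm _
end

section
/- Let β₋, β₊ : ℝ → ℝ be continuously differentiable with D(t) := β₋(t)² + β₊(t)² ≠ 0 for all t, and let R ∈ ℝ. For continuously differentiable u₋, u₊ : ℝ → ℂⁿ, define η₋(t) := β₋(t)·u₋(t−R) − β₊(t)·u₊(t+R) and η₊(t) := β₊(t)·u₋(t−R) + β₋(t)·u₊(t+R); define e(t) := −(β₋'(t)β₋(t) + β₊'(t)β₊(t))/D(t) and f(t) := −(β₋'(t)β₊(t) − β₊'(t)β₋(t))/D(t); set w₋(t) := η₋'(t) + e(t)η₋(t) + f(t)η₊(t) and w₊(t) := η₊'(t); and finally set v₋(t) := (β₋(t)w₋(t)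 + β₊(t)w₊(t))/D(t) and v₊(t) := (−β₊(t)w₋(t) + β₋(t)w₊(t))/D(t). Then for all t ∈ ℝ: v₋(t+R) = u₋'(t) + ((β₊β₊')/D)(t+R)·u₋(t) + ((β₊β₋')/D)(t+R)·u₊(t+2R), and v₊(t−R) = u₊'(t) + ((β₋β₊')/D)(t−R)·u₋(t−2R) + ((β₋β₋')/D)(t−R)·u₊(t). -/
/-- Lemma 3.2. Here `βm`, `βp` play the roles of `β₋`, `β₊`; `um`, `up`
of `u₋`, `u₊`; etc. The conjugation `Ψ^R_L = (T^R)^{-1} ∘ (∂_t + ω) ∘ T^R` of the covariant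
derivative `∂_t + ω` by the total gluing map `T^R` equals `∂_t` plus the explicit
zeroth-order error term; in particular there is no loss of differentiability. -/
theorem stmt9 (n : ℕ) (βm βp : ℝ → ℝ) (hβm : ContDiff ℝ 1 βm) (hβp : ContDiff ℝ 1 βp)
    (hD : ∀ t : ℝ, βm t ^ 2 + βp t ^ 2 ≠ 0) (R : ℝ)
    (um up : ℝ → (Fin n → ℂ)) (hum : ContDiff ℝ 1 um) (hup : ContDiff ℝ 1 up) :
    let D : ℝ → ℝ := fun t => βm t ^ 2 + βp t ^ 2
    let ηm : ℝ → (Fin n → ℂ) := fun t => βm t • um (t - R) - βp t • up (t + R)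
    let ηp : ℝ → (Fin n → ℂ) := fun t => βp t • um (t - R) + βm t • up (t + R)
    let e : ℝ → ℝ := fun t => -(deriv βm t * βm t + deriv βp t * βp t) / D t
    let f : ℝ → ℝ := fun t => -(deriv βm t * βp t - deriv βp t * βm t) / D t
    let wm : ℝ → (Fin n → ℂ) := fun t => deriv ηm t + e t • ηm t + f t • ηp t
    let wp : ℝ → (Fin n → ℂ) := fun t => deriv ηp t
    let vm : ℝ → (Fin n → ℂ) := fun t => (D t)⁻¹ • (βm t • wm t + βp t • wp t)
    let vp : ℝ → (Fin n → ℂ) := fun t => (D t)⁻¹ • (-(βp t) • wm t + βm t • wp t)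
    ∀ t : ℝ,
      vm (t + R) = deriv um t
          + ((βp (t + R) * deriv βp (t + R)) / D (t + R)) • um t
          + ((βp (t + R) * deriv βm (t + R)) / D (t + R)) • up (t + 2 * R)
        ∧
      vp (t - R) = deriv up t
          + ((βm (t - R) * deriv βp (t - R)) / D (t - R)) • um (t - 2 * R)
          + ((βm (t - R) * deriv βm (t - R)) / D (t - R)) • up t := by
  intro D ηm ηp e f wm wp vm vp
  have hum' : ∀ s, HasDerivAt (fun t => um (t - R)) (deriv um (s - R)) s := fun s =>
    ((hum.differentiable one_ne_zero (s - R)).hasDerivAt).comp_sub_const s R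
  have hup' : ∀ s, HasDerivAt (fun t => up (t + R)) (deriv up (s + R)) s := fun s =>
    ((hup.differentiable one_ne_zero (s + R)).hasDerivAt).comp_add_const s R
  have hm : ∀ s, HasDerivAt βm (deriv βm s) s := fun s =>
    (hβm.differentiable one_ne_zero s).hasDerivAt
  have hp : ∀ s, HasDerivAt βp (deriv βp s) s := fun s =>
    (hβp.differentiable one_ne_zero s).hasDerivAt
  have h1 : ∀ s, deriv ηm s = (βm s • deriv um (s - R) + deriv βm s • um (s - R))
      - (βp s • deriv up (s + R) + deriv βp s • up (s + R)) := fun s =>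
    (((hm s).smul (hum' s)).sub ((hp s).smul (hup' s))).deriv
  have h2 : ∀ s, deriv ηp s = (βp s • deriv um (s - R) + deriv βp s • um (s - R))
      + (βm s • deriv up (s + R) + deriv βm s • up (s + R)) := fun s =>
    (((hp s).smul (hum' s)).add ((hm s).smul (hup' s))).deriv
  have hwm : ∀ s, wm s = βm s • deriv um (s - R) - βp s • deriv up (s + R) := by
    intro s
    have := hD s
    simp only [wm, h1, e, f, ηm, ηp, D]
    match_scalars <;> field_simp <;> ring
  have hvm : ∀ s, vm s = deriv um (s - R) + ((βp s * deriv βp s) / D s) • um (s - R)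
      + ((βp s * deriv βm s) / D s) • up (s + R) := by
    intro s
    have := hD s
    simp only [vm, hwm, wp, h2, D]
    match_scalars <;> field_simp <;> ring
  have hvp : ∀ s, vp s = deriv up (s + R) + ((βm s * deriv βp s) / D s) • um (s - R)
      + ((βm s * deriv βm s) / D s) • up (s + R) := by
    intro s
    have := hD s
    simp only [vp, hwm, wp, h2, D]
    match_scalars <;> field_simp <;> ring
  intro t
  refine ⟨?_, ?_⟩
  · rw [hvm, add_sub_cancel_right, show t + R + R = t + 2 * R by ring]
  · rw [hvp, sub_add_cancel, show t - R - R = t - 2 * R by ring]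
end

section
/- Let δ ∈ (0,1), p > 1, and let d, l > 0 with d > l and R ≥ d + l. Let g : ℝ → ℝ be bounded measurable with g(s) = 0 for all s outside the interval (−d−l, −d+l), and let u : ℝ → ℂⁿ be measurable with ‖u‖_{0,p,δ,−} := (∫_{−∞}^0 e^{−pδt} ‖u(t)‖^p dt)^{1/p} < ∞. Then (∫_0^∞ e^{pδt} ‖g(t−R)·u(t−2R)‖^p dt)^{1/p} ≤ e^{2δ(l−d)} · (sup_s |g(s)|) · ‖u‖_{0,p,δ,−}. -/
open MeasureTheory Set
open scoped ENNReal

/-- The weighted `L^p` norm `‖f‖_{0,p,δ,−} = (∫_{−∞}^0 e^{−pδt} ‖f t‖^p dt)^{1/p}`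
on the half-line `(−∞,0]`. -/
noncomputable def wnormMinus (n : ℕ) (p δ : ℝ) (f : ℝ → (Fin n → ℂ)) : ℝ≥0∞ :=
  (∫⁻ t in Iio (0:ℝ), ENNReal.ofReal (Real.exp (-(p * δ * t)) * ‖f t‖ ^ p)) ^ (1 / p)

/-- Lemma 3.6. With `g` bounded by `M`, supported in `(−d−l, −d+l)`,
and `R ≥ d + l`:
`‖τ_{−R}g · τ_{−2R}u‖_{0,p,δ,+} ≤ e^{2δ(l−d)} (sup|g|) ‖u‖_{0,p,δ,−}`. -/
theorem stmt10 (n : ℕ) (δ p d l R M : ℝ) (hδ : δ ∈ Ioo (0:ℝ) 1) (hp : 1 < p)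
    (hd : 0 < d) (hl : 0 < l) (hld : l < d) (hR : d + l ≤ R)
    (g : ℝ → ℝ) (hg : Measurable g) (hgM : ∀ s, |g s| ≤ M)
    (hsupp : ∀ s, s ∉ Ioo (-d - l) (-d + l) → g s = 0)
    (u : ℝ → (Fin n → ℂ)) (hu : Measurable u)
    (hufin : wnormMinus n p δ u < ⊤) :
    wnormPlus n p δ (fun t => g (t - R) • u (t - 2 * R)) ≤
      ENNReal.ofReal (Real.exp (2 * δ * (l - d)) * M) * wnormMinus n p δ u := by
  have hp0 : 0 < p := by linarith
  have hM : 0 ≤ M := (abs_nonneg _).trans (hgM 0)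
  have hδ0 : 0 < δ := hδ.1
  set C : ℝ := Real.exp (2 * δ * (l - d)) * M with hC
  have hC0 : 0 ≤ C := by positivity
  set h : ℝ → ℝ≥0∞ := (Iio (0:ℝ)).indicator
    (fun t => ENNReal.ofReal (Real.exp (-(p * δ * t)) * ‖u t‖ ^ p)) with hh
  have key : ∀ t, ENNReal.ofReal (Real.exp (p * δ * t) * ‖g (t - R) • u (t - 2 * R)‖ ^ p)
      ≤ ENNReal.ofReal C ^ p * h (t - 2 * R) := by
    intro t
    by_cases ht : t - R ∈ Ioo (-d - l) (-d + l)
    · have hneg : t - 2 * R ∈ Iio (0:ℝ) := by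
        have := ht.2
        simp only [mem_Iio]
        linarith
      rw [hh, indicator_of_mem hneg, ENNReal.ofReal_rpow_of_nonneg hC0 hp0.le,
        ← ENNReal.ofReal_mul (by positivity)]
      apply ENNReal.ofReal_le_ofReal
      have h1 : ‖g (t - R) • u (t - 2 * R)‖ ^ p ≤ M ^ p * ‖u (t - 2 * R)‖ ^ p := by
        rw [← Real.mul_rpow hM (norm_nonneg _), norm_smul, Real.norm_eq_abs]
        gcongr
        exact hgM _
      have h2 : Real.exp (p * δ * t) ≤
          Real.exp (2 * δ * (l - d) * p) * Real.exp (-(p * δ * (t - 2 * R))) := by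
        rw [← Real.exp_add, Real.exp_le_exp]
        have h3 : 0 ≤ p * δ * ((-d + l) - (t - R)) :=
          mul_nonneg (by positivity) (by linarith [ht.2])
        nlinarith
      calc _ ≤ (Real.exp (2 * δ * (l - d) * p) * Real.exp (-(p * δ * (t - 2 * R)))) *
            (M ^ p * ‖u (t - 2 * R)‖ ^ p) := by gcongr
        _ = _ := by
          rw [hC, Real.mul_rpow (Real.exp_pos _).le hM, ← Real.exp_mul]
          ring
    · rw [hsupp _ ht]
      simp [Real.zero_rpow hp0.ne']
  unfold wnormPlus wnormMinus
  have hK : ENNReal.ofReal C ^ p ≠ ⊤ :=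
    ENNReal.rpow_ne_top_of_nonneg hp0.le ENNReal.ofReal_ne_top
  have hint : (∫⁻ t in Ioi (0:ℝ),
      ENNReal.ofReal (Real.exp (p * δ * t) * ‖g (t - R) • u (t - 2 * R)‖ ^ p)) ≤
      ENNReal.ofReal C ^ p *
        ∫⁻ t in Iio (0:ℝ), ENNReal.ofReal (Real.exp (-(p * δ * t)) * ‖u t‖ ^ p) := by
    calc _ ≤ ∫⁻ t, ENNReal.ofReal (Real.exp (p * δ * t) * ‖g (t - R) • u (t - 2 * R)‖ ^ p) :=
          setLIntegral_le_lintegral _ _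
      _ ≤ ∫⁻ t, ENNReal.ofReal C ^ p * h (t - 2 * R) := lintegral_mono key
      _ = ENNReal.ofReal C ^ p * ∫⁻ t, h (t - 2 * R) := lintegral_const_mul' _ _ hK
      _ = ENNReal.ofReal C ^ p * ∫⁻ t, h t := by rw [lintegral_sub_right_eq_self]
      _ = _ := by rw [hh, lintegral_indicator measurableSet_Iio]
  calc _ ≤ (ENNReal.ofReal C ^ p *
        ∫⁻ t in Iio (0:ℝ), ENNReal.ofReal (Real.exp (-(p * δ * t)) * ‖u t‖ ^ p)) ^ (1 / p) :=
        ENNReal.rpow_le_rpow hint (by positivity)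
    _ = _ := by
      rw [ENNReal.mul_rpow_of_nonneg _ _ (by positivity), ← ENNReal.rpow_mul,
        mul_one_div_cancel hp0.ne', ENNReal.rpow_one]
end

section
/- Let δ ∈ (0,1), p > 1. Let α : ℝ → [0,1] be smooth with α(t) = 1 for t ≤ −1 and α(t) = 0 for t ≥ 1. Let l ≥ 1, d = 3l, and define β₋(t) := α((t−d)/l), β₊(t) := 1 − α((t+d)/l), and D := β₋² + β₊². Let R ≥ d + l, and let u₋, u₊ : ℝ → ℂⁿ be measurable with ‖u₋‖_{0,p,δ,−} < ∞ and ‖u₊‖_{0,p,δ,+} < ∞. Then (∫_0^∞ e^{pδt} ‖((β₋β₊')/D)(t−R)·u₋(t−2R) + ((β₋β₋')/D)(t−R)·u₊(t)‖^p dt)^{1/p} ≤ (sup|α'|/l)·( e^{2δ(l−d)}·‖u₋‖_{0,p,δ,−} + ‖u₊‖_{0,p,δ,+} ). -/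
open MeasureTheory Set
open scoped ENNReal

lemma aux_weight (p : ℝ) (hp : 1 < p) (c x : ℝ) (hx : 0 ≤ x) :
    ENNReal.ofReal (Real.exp (p * c) * x ^ p) = ENNReal.ofReal (Real.exp c * x) ^ p := by
  rw [ENNReal.ofReal_rpow_of_nonneg (by positivity) (by linarith),
    Real.mul_rpow (Real.exp_pos _).le hx, ← Real.exp_mul, mul_comm p c]

lemma aux_deriv_zero (α : ℝ → ℝ) (hα1 : ∀ t : ℝ, t ≤ -1 → α t = 1)
    (hα0 : ∀ t : ℝ, 1 ≤ t → α t = 0) (t : ℝ) (ht : t < -1 ∨ 1 < t) : deriv α t = 0 := by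
  rcases ht with ht | ht
  · have : α =ᶠ[nhds t] fun _ => (1:ℝ) := by
      filter_upwards [Iio_mem_nhds ht] with x hx using hα1 x (le_of_lt hx)
    rw [this.deriv_eq]; simp
  · have : α =ᶠ[nhds t] fun _ => (0:ℝ) := by
      filter_upwards [Ioi_mem_nhds ht] with x hx using hα0 x (le_of_lt hx)
    rw [this.deriv_eq]; simp

lemma aux_bdd (α : ℝ → ℝ) (hα : ContDiff ℝ (⊤ : ℕ∞) α) (hα1 : ∀ t : ℝ, t ≤ -1 → α t = 1)
    (hα0 : ∀ t : ℝ, 1 ≤ t → α t = 0) : BddAbove (range fun s : ℝ => |deriv α s|) := by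
  have hc : Continuous (deriv α) := hα.continuous_deriv (by simp)
  have hs : HasCompactSupport (deriv α) := by
    refine HasCompactSupport.intro (isCompact_Icc (a := (-1:ℝ)) (b := 1)) ?_
    intro x hx
    apply aux_deriv_zero α hα1 hα0
    by_contra! h
    exact hx ⟨h.1, h.2⟩
  obtain ⟨M, hM⟩ := hs.exists_bound_of_continuous hc
  exact ⟨M, by rintro _ ⟨s, rfl⟩; exact hM s⟩

lemma aux_coef (b x D K : ℝ) (hb : b ∈ Icc (0:ℝ) 1) (hx : |x| ≤ K) (hD : 1 ≤ D) :
    |b * x / D| ≤ K := by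
  rw [abs_div, abs_mul, abs_of_nonneg hb.1, abs_of_pos (by linarith : 0 < D)]
  apply (div_le_self (mul_nonneg hb.1 (abs_nonneg _)) hD).trans
  nlinarith [hb.2, abs_nonneg x]

/-- key estimate in Lemma 3.3. Here `βm`, `βp` play the roles of
`β₋(t) = α((t−d)/l)`, `β₊(t) = 1 − α((t+d)/l)`, `D = β₋² + β₊²`, and `um`, `up` of
`u₋`, `u₊`. The error component `E₊` of the linear filled-section satisfies
`‖E₊(u₋,u₊)‖_{0,p,δ,+} ≤ (sup|α'|/l)(e^{2δ(l−d)}‖u₋‖_{0,p,δ,−} + ‖u₊‖_{0,p,δ,+})`. -/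
theorem stmt14 (n : ℕ) (δ p : ℝ) (hδ : δ ∈ Ioo (0:ℝ) 1) (hp : 1 < p)
    (α : ℝ → ℝ) (hα : ContDiff ℝ (⊤ : ℕ∞) α) (hα01 : ∀ t, α t ∈ Icc (0:ℝ) 1)
    (hα1 : ∀ t : ℝ, t ≤ -1 → α t = 1) (hα0 : ∀ t : ℝ, 1 ≤ t → α t = 0)
    (l d : ℝ) (hl : 1 ≤ l) (hd : d = 3 * l) (R : ℝ) (hR : d + l ≤ R)
    (um up : ℝ → (Fin n → ℂ)) (hum : Measurable um) (hup : Measurable up)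
    (humfin : wnormMinus n p δ um < ⊤) (hupfin : wnormPlus n p δ up < ⊤) :
    let βm : ℝ → ℝ := fun t => α ((t - d) / l)
    let βp : ℝ → ℝ := fun t => 1 - α ((t + d) / l)
    let D : ℝ → ℝ := fun t => βm t ^ 2 + βp t ^ 2
    wnormPlus n p δ
        (fun t => ((βm (t - R) * deriv βp (t - R)) / D (t - R)) • um (t - 2 * R)
          + ((βm (t - R) * deriv βm (t - R)) / D (t - R)) • up t) ≤
      ENNReal.ofReal ((⨆ s : ℝ, |deriv α s|) / l) *
        (ENNReal.ofReal (Real.exp (2 * δ * (l - d))) * wnormMinus n p δ um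
          + wnormPlus n p δ up) := by
  intro βm βp D
  obtain ⟨hδ0, -⟩ := hδ
  have hp0 : 0 < p := by linarith
  have hl0 : 0 < l := by linarith
  have hbdd := aux_bdd α hα hα1 hα0
  set C : ℝ := ⨆ s : ℝ, |deriv α s| with hC
  have hCs : ∀ s, |deriv α s| ≤ C := fun s => le_ciSup hbdd s
  have hC0 : 0 ≤ C := (abs_nonneg _).trans (hCs 0)
  have hdiff : Differentiable ℝ α := hα.differentiable (by simp)
  have hdm : ∀ s, deriv βm s = deriv α ((s - d) / l) / l := by
    intro s
    have h1 : HasDerivAt (fun t : ℝ => (t - d) / l) (1 / l) s :=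
      ((hasDerivAt_id s).sub_const d).div_const l
    have h2 := (hdiff ((s - d) / l)).hasDerivAt.comp s h1
    have h3 : deriv βm s = deriv α ((s - d) / l) * (1 / l) := h2.deriv
    rw [h3]; ring
  have hdp : ∀ s, deriv βp s = - (deriv α ((s + d) / l) / l) := by
    intro s
    have h1 : HasDerivAt (fun t : ℝ => (t + d) / l) (1 / l) s :=
      ((hasDerivAt_id s).add_const d).div_const l
    have h2 := ((hdiff ((s + d) / l)).hasDerivAt.comp s h1).const_sub 1
    have h3 : deriv βp s = -(deriv α ((s + d) / l) * (1 / l)) := h2.deriv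
    rw [h3]; ring
  have hD1 : ∀ s, 1 ≤ D s := by
    intro s
    rcases le_total s 0 with hs | hs
    · have : βm s = 1 := hα1 _ (by rw [div_le_iff₀ hl0]; linarith)
      have h : D s = βm s ^ 2 + βp s ^ 2 := rfl
      rw [h, this]; nlinarith [sq_nonneg (βp s)]
    · have : βp s = 1 := by
        have h : α ((s + d) / l) = 0 := hα0 _ (by rw [le_div_iff₀ hl0]; linarith)
        simp [βp, h]
      have h : D s = βm s ^ 2 + βp s ^ 2 := rfl
      rw [h, this]; nlinarith [sq_nonneg (βm s)]
  have hca : ∀ s, |βm s * deriv βp s / D s| ≤ C / l := by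
    intro s
    refine aux_coef _ _ _ _ (hα01 _) ?_ (hD1 s)
    rw [hdp, abs_neg, abs_div, abs_of_pos hl0]
    gcongr; exact hCs _
  have hcb : ∀ s, |βm s * deriv βm s / D s| ≤ C / l := by
    intro s
    refine aux_coef _ _ _ _ (hα01 _) ?_ (hD1 s)
    rw [hdm, abs_div, abs_of_pos hl0]
    gcongr; exact hCs _
  have hca0 : ∀ s, (s < -d - l ∨ l - d < s) → βm s * deriv βp s / D s = 0 := by
    intro s hs
    have : deriv α ((s + d) / l) = 0 := by
      apply aux_deriv_zero α hα1 hα0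
      rcases hs with hs | hs
      · left; rw [div_lt_iff₀ hl0]; linarith
      · right; rw [lt_div_iff₀ hl0]; linarith
    rw [hdp, this]; simp
  -- the two dominating functions
  let H : ℝ → ℝ≥0∞ := (Iio (0:ℝ)).indicator
    (fun s => ENNReal.ofReal (Real.exp (-(δ * s)) * ‖um s‖))
  let G : ℝ → ℝ≥0∞ := fun t => ENNReal.ofReal (Real.exp (δ * t) * ‖up t‖)
  have hHm : Measurable H := by
    refine Measurable.indicator ?_ measurableSet_Iio
    fun_prop
  have hGm : Measurable G := by fun_prop
  set K : ℝ≥0∞ := ENNReal.ofReal (C / l) with hK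
  set e : ℝ≥0∞ := ENNReal.ofReal (Real.exp (2 * δ * (l - d))) with he
  have hpt : ∀ t : ℝ, ENNReal.ofReal (Real.exp (p * δ * t) *
      ‖((βm (t - R) * deriv βp (t - R)) / D (t - R)) • um (t - 2 * R)
          + ((βm (t - R) * deriv βm (t - R)) / D (t - R)) • up t‖ ^ p) ≤
      (((fun t => K * (e * H (t - 2 * R))) + fun t => K * G t) t) ^ p := by
    intro t
    rw [mul_assoc, aux_weight p hp _ _ (norm_nonneg _)]
    refine ENNReal.rpow_le_rpow ?_ hp0.le
    have hcb' := hcb (t - R)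
    have hca' := hca (t - R)
    have hca0' := hca0 (t - R)
    generalize (βm (t - R) * deriv βp (t - R)) / D (t - R) = a at *
    generalize (βm (t - R) * deriv βm (t - R)) / D (t - R) = b at *
    have h1 : Real.exp (δ * t) * ‖a • um (t - 2 * R) + b • up t‖ ≤
        Real.exp (δ * t) * (|a| * ‖um (t - 2 * R)‖) + C / l * (Real.exp (δ * t) * ‖up t‖) := by
      have h2 : ‖a • um (t - 2 * R) + b • up t‖ ≤
          |a| * ‖um (t - 2 * R)‖ + C / l * ‖up t‖ := by
        refine (norm_add_le _ _).trans ?_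
        rw [norm_smul, norm_smul, Real.norm_eq_abs, Real.norm_eq_abs]
        gcongr
      calc _ ≤ Real.exp (δ * t) * (|a| * ‖um (t - 2 * R)‖ + C / l * ‖up t‖) := by gcongr
        _ = _ := by ring
    refine (ENNReal.ofReal_le_ofReal h1).trans ?_
    refine ENNReal.ofReal_add_le.trans ?_
    simp only [Pi.add_apply]
    refine add_le_add ?_ ?_
    · by_cases hs : t - R < -d - l ∨ l - d < t - R
      · rw [hca0' hs]; simp
      · push Not at hs
        have hneg : t - 2 * R ∈ Iio (0:ℝ) := by
          simp only [mem_Iio]; linarith [hs.2]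
        simp only [H, indicator_of_mem hneg]
        rw [hK, he, ← ENNReal.ofReal_mul (Real.exp_pos _).le,
          ← ENNReal.ofReal_mul (by positivity)]
        apply ENNReal.ofReal_le_ofReal
        have hexp : Real.exp (δ * t) ≤
            Real.exp (2 * δ * (l - d)) * Real.exp (-(δ * (t - 2 * R))) := by
          rw [← Real.exp_add]
          apply Real.exp_le_exp.mpr
          nlinarith [mul_le_mul_of_nonneg_left hs.2 hδ0.le]
        calc Real.exp (δ * t) * (|a| * ‖um (t - 2 * R)‖)
            ≤ (Real.exp (2 * δ * (l - d)) * Real.exp (-(δ * (t - 2 * R)))) *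
              (C / l * ‖um (t - 2 * R)‖) := by gcongr
          _ = _ := by ring
    · rw [ENNReal.ofReal_mul (by positivity)]
  have hFm : Measurable (fun t => K * (e * H (t - 2 * R))) := by fun_prop
  have hroot : ∀ (c x : ℝ≥0∞), (c ^ p * x) ^ (1 / p) = c * x ^ (1 / p) := by
    intro c x
    rw [ENNReal.mul_rpow_of_nonneg _ _ (by positivity), ← ENNReal.rpow_mul,
      mul_one_div_cancel hp0.ne', ENNReal.rpow_one]
  have hA : (∫⁻ t in Ioi (0:ℝ), (K * (e * H (t - 2 * R))) ^ p) ^ (1 / p) ≤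
      K * (e * wnormMinus n p δ um) := by
    have h1 : ∫⁻ t, H t ^ p =
        ∫⁻ t in Iio (0:ℝ), ENNReal.ofReal (Real.exp (-(p * δ * t)) * ‖um t‖ ^ p) := by
      rw [← lintegral_indicator measurableSet_Iio]
      congr 1; ext t
      by_cases ht : t ∈ Iio (0:ℝ)
      · simp only [H, indicator_of_mem ht]
        rw [← aux_weight p hp _ _ (norm_nonneg _)]
        ring_nf
      · simp only [H, indicator_of_notMem ht]
        exact ENNReal.zero_rpow_of_pos hp0
    have h2 : ∫⁻ t, (K * (e * H (t - 2 * R))) ^ p = (K * e) ^ p * ∫⁻ t, H t ^ p := by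
      rw [← lintegral_sub_right_eq_self (fun t => H t ^ p) (2 * R),
        ← lintegral_const_mul _ (by fun_prop)]
      congr 1; ext t
      rw [← mul_assoc, ENNReal.mul_rpow_of_nonneg _ _ hp0.le]
    calc _ ≤ (∫⁻ t, (K * (e * H (t - 2 * R))) ^ p) ^ (1 / p) :=
          ENNReal.rpow_le_rpow (setLIntegral_le_lintegral _ _) (by positivity)
      _ = _ := by rw [h2, hroot, h1, mul_assoc]; rfl
  have hB : (∫⁻ t in Ioi (0:ℝ), (K * G t) ^ p) ^ (1 / p) = K * wnormPlus n p δ up := by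
    have h2 : ∫⁻ t in Ioi (0:ℝ), (K * G t) ^ p = K ^ p *
        ∫⁻ t in Ioi (0:ℝ), ENNReal.ofReal (Real.exp (p * δ * t) * ‖up t‖ ^ p) := by
      rw [← lintegral_const_mul _ (by fun_prop)]
      congr 1; ext t
      rw [ENNReal.mul_rpow_of_nonneg _ _ hp0.le, mul_assoc p δ t,
        aux_weight p hp _ _ (norm_nonneg _)]
    rw [h2, hroot]; rfl
  calc _ ≤ (∫⁻ t in Ioi (0:ℝ),
        (((fun t => K * (e * H (t - 2 * R))) + fun t => K * G t) t) ^ p) ^ (1 / p) :=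
        ENNReal.rpow_le_rpow (lintegral_mono hpt) (by positivity)
    _ ≤ (∫⁻ t in Ioi (0:ℝ), (K * (e * H (t - 2 * R))) ^ p) ^ (1 / p) +
        (∫⁻ t in Ioi (0:ℝ), (K * G t) ^ p) ^ (1 / p) :=
        ENNReal.lintegral_Lp_add_le hFm.aemeasurable (by fun_prop) hp.le
    _ ≤ K * (e * wnormMinus n p δ um) + K * wnormPlus n p δ up := by
        rw [hB]; gcongr
    _ = _ := by rw [mul_add]
end
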